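/- If the L-structure on ℚ is an o-minimal expansion of (ℚ,<,+,0,1), then it is ℚ-linearly bounded: for every definable function f : ℚ → ℚ there exist a positive integer n and a ∈ ℚ such that |f(x)| < n·|x| for all x ∈ ℚ with |x| > |a| (|·| being the usual absolute value on ℚ). -/

import Mathlib

open FirstOrder Language Set

/-!
If a definable `F` grows faster than every line, its generalized inverse `g` is definable, tends to
infinity and grows slower than every line. By o-minimality the increments of `g` are eventually
comparable with one another, which forces `g (x + t) - g x` to be asymptotic to `t * w x` for a
slowly varying function `w`. Comparing increments of `g` at different points `x` and `y` therefore
compares products with the ratio `w x / w y`, and this ratio comes arbitrarily close to any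
prescribed positive value. So the set of `l > 0` with `c < l ^ 2` is definable up to its endpoint,
although multiplication need not be. Its infimum, which exists by o-minimality, is a square root
of `c`; but `2` has no square root in `ℚ`.
-/

namespace OMinimal

open Filter
open scoped fwdDiff

theorem eventually_add_const_of_eventually {G : Type*} [AddCommGroup G] [LinearOrder G]
    [IsOrderedAddMonoid G] {P : G → Prop} (hP : ∀ᶠ x in atTop, P x) (t : G) :
    ∀ᶠ x in atTop, P (x + t) :=
  (tendsto_atTop_add_const_right _ t tendsto_id).eventually hP

section Archimedean

variable {K : Type*} [Field K] [LinearOrder K] [IsStrictOrderedRing K] [Archimedean K] {u : ℕ → K}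

theorem tendsto_add_natCast_mul_atTop {t : K} (x : K) (ht : 0 < t) :
    Tendsto (fun n : ℕ => x + n * t) atTop atTop :=
  tendsto_atTop_add_const_left _ _ (tendsto_natCast_atTop_atTop.atTop_mul_const ht)

theorem exists_natCast_mul_le_lt {t x : K} (ht : 0 < t) (hx : 0 ≤ x) :
    ∃ n : ℕ, n * t ≤ x ∧ x < (n + 1) * t := by
  let := Archimedean.floorRing K
  exact ⟨⌊x / t⌋₊, (le_div_iff₀ ht).1 (Nat.floor_le (by positivity)),
    (div_lt_iff₀ ht).1 (Nat.lt_floor_add_one _)⟩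

theorem frequently_sub_lt_of_sublinear (hsub : ∀ ε > 0, ∀ᶠ n : ℕ in atTop, u n ≤ ε * n)
    {b : ℕ} (hb : 0 < b) {ε : K} (hε : 0 < ε) : ∃ᶠ n in atTop, u (n + b) - u n < ε := by
  intro hlarge
  obtain ⟨N, hN⟩ := eventually_atTop.1 hlarge
  have linear_growth (j : ℕ) : u N + j * ε ≤ u (N + j * b) := by
    induction j with
    | zero => simp
    | succ j ih =>
      have := not_lt.1 (hN (N + j * b) (Nat.le_add_right _ _))
      rw [Nat.succ_mul, ← add_assoc]
      push_cast
      linarith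
  set δ := ε / (2 * b)
  have hδ : δ * b = ε / 2 := by simp only [δ]; field_simp
  have hsteps : Tendsto (fun j => N + j * b) atTop atTop :=
    tendsto_atTop_mono (fun j => (Nat.le_mul_of_pos_right j hb).trans (Nat.le_add_left _ _))
      tendsto_id
  have hlin : Tendsto (fun j : ℕ => (j : K) * (ε / 2)) atTop atTop :=
    tendsto_natCast_atTop_atTop.atTop_mul_const (by positivity)
  obtain ⟨j, hj, hj'⟩ := ((hsteps.eventually (hsub δ (by positivity))).and
    (hlin.eventually_gt_atTop (δ * N - u N))).exists
  have : δ * (N + j * b : ℕ) = δ * N + j * (ε / 2) := by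
    push_cast; rw [← hδ]; ring
  linarith [linear_growth j]

theorem sum_range_succ_add_sub_sum_range_add {G : Type*} [AddCommGroup G] (u : ℕ → G) (a n : ℕ) :
    ∑ j ∈ Finset.range a, u (n + 1 + j) - ∑ j ∈ Finset.range a, u (n + j) = u (n + a) - u n := by
  simpa only [Finset.sum_sub_distrib, add_assoc, add_comm 1, add_zero] using
    Finset.sum_range_sub (fun j => u (n + j)) a

/- If `q (u (n + a) - u n) ≤ p (u (n + b) - u n)` for all `n`, then `q A n - p B n` is antitone for
the window sums `A n ≈ a u n` and `B n ≈ b u n`, so `(q a - p b) u n` is bounded. -/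
theorem exists_mul_sub_lt_mul_sub (hmono : Monotone u) (htop : Tendsto u atTop atTop)
    (hsub : ∀ ε > 0, ∀ᶠ n : ℕ in atTop, u n ≤ ε * n) {a b p q : ℕ} (hb : 0 < b)
    (hab : p * b < q * a) : ∃ n, p * (u (n + b) - u n) < q * (u (n + a) - u n) := by
  by_contra! h
  set A := fun n => ∑ j ∈ Finset.range a, u (n + j)
  set B := fun n => ∑ j ∈ Finset.range b, u (n + j)
  have hanti : Antitone fun n => q * A n - p * B n := antitone_nat_of_succ_le fun n => by
    have := h n
    rw [← sum_range_succ_add_sub_sum_range_add, ← sum_range_succ_add_sub_sum_range_add] at this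
    linarith
  have hA (n : ℕ) : a * u n ≤ A n := by
    simpa using Finset.card_nsmul_le_sum (Finset.range a) _ _ fun j _ =>
      hmono (Nat.le_add_right n j)
  have hB (n : ℕ) : B n ≤ b * u (n + b) := by
    simpa using Finset.sum_le_card_nsmul (Finset.range b) _ _ fun j hj =>
      hmono (Nat.add_le_add_left (Finset.mem_range.1 hj).le n)
  have hpos : (0 : K) < q * a - p * b := sub_pos.2 (mod_cast hab)
  obtain ⟨n, hn, hn'⟩ := ((frequently_sub_lt_of_sublinear hsub hb one_pos).and_eventually
    ((htop.const_mul_atTop hpos).eventually_gt_atTop (q * A 0 - p * B 0 + p * b))).exists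
  have hqA : (q : K) * (a * u n) ≤ q * A n := by gcongr; exact hA n
  have hpB : (p : K) * B n ≤ p * (b * (u n + 1)) := by
    gcongr
    exact (hB n).trans (by gcongr; linarith)
  linarith [hanti n.zero_le]

end Archimedean

theorem fwdDiff_add_step {M G : Type*} [AddCommMonoid M] [AddCommGroup G] (g : M → G) (k l x : M) :
    Δ_[k + l] g x = Δ_[k] g x + Δ_[l] g (x + k) := by
  simp only [fwdDiff, add_assoc, sub_add_sub_cancel']

/-- A function growing as slowly and as regularly as a logarithm: it is eventually below every
line of positive slope, tends to infinity, and any two natural multiples of its increments are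
eventually comparable. -/
structure IsSlowlyGrowing {K : Type*} [Field K] [LinearOrder K] (g : K → K) : Prop where
  tendsto_atTop : Tendsto g atTop atTop
  sublinear : ∀ ε > 0, ∀ᶠ x in atTop, g x ≤ ε * x
  lt_or_le : ∀ (p q : ℕ) (k l : K), (∀ᶠ x in atTop, p * Δ_[k] g x < q * Δ_[l] g x) ∨
    ∀ᶠ x in atTop, q * Δ_[l] g x ≤ p * Δ_[k] g x

/-- The condition `l ^ 2 ≤ c` (up to the boundary case), expressed by means of increments of `g`
without multiplication: since `Δ_[t] g x` is asymptotic to `t * Δ_[1] g x`, it says that the ratio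
`Δ_[1] g x / Δ_[1] g y` can be placed between `l` and `c / l` for arbitrarily large `x` and `y`. -/
def BelowSqrt {K : Type*} [Field K] [LinearOrder K] (g : K → K) (c l : K) : Prop :=
  ∀ X, ∃ x, X < x ∧ ∃ y, X < y ∧ Δ_[l] g y ≤ Δ_[1] g x ∧ Δ_[l] g x ≤ Δ_[c] g y

namespace IsSlowlyGrowing

variable {K : Type*} [Field K] [LinearOrder K] [IsStrictOrderedRing K] [Archimedean K]
  {g : K → K} {c k l m t : K}

theorem tendsto_steps (hg : IsSlowlyGrowing g) (x : K) (ht : 0 < t) :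
    Tendsto (fun n : ℕ => g (x + n * t)) atTop atTop :=
  hg.tendsto_atTop.comp (tendsto_add_natCast_mul_atTop x ht)

theorem sublinear_steps (hg : IsSlowlyGrowing g) (x : K) (ht : 0 < t) (ε : K) (hε : 0 < ε) :
    ∀ᶠ n : ℕ in atTop, g (x + n * t) ≤ ε * n := by
  filter_upwards [(tendsto_add_natCast_mul_atTop x ht).eventually
      (hg.sublinear (ε / (2 * t)) (by positivity)),
    tendsto_natCast_atTop_atTop.eventually_ge_atTop (x / t)] with n hn hxn
  calc g (x + n * t) ≤ ε / (2 * t) * (x + n * t) := hn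
    _ = ε / 2 * (x / t + n) := by field_simp
    _ ≤ ε / 2 * (n + n) := by gcongr
    _ = ε * n := by ring

theorem exists_fwdDiff_step_lt (hg : IsSlowlyGrowing g) (x : K) (ht : 0 < t) (hc : 0 < c) :
    ∃ n : ℕ, Δ_[t] g (x + n * t) < c := by
  obtain ⟨n, hn⟩ := (frequently_sub_lt_of_sublinear (hg.sublinear_steps x ht) one_pos hc).exists
  refine ⟨n, ?_⟩
  simpa only [fwdDiff, Nat.cast_add, Nat.cast_one, add_one_mul, ← add_assoc] using hn

theorem eventually_fwdDiff_pos (hg : IsSlowlyGrowing g) (ht : 0 < t) :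
    ∀ᶠ x in atTop, 0 < Δ_[t] g x := by
  rcases hg.lt_or_le 0 1 t t with hpos | hnonpos
  · simpa using hpos
  · obtain ⟨X, hX⟩ := eventually_atTop.1 hnonpos
    have hanti : Antitone fun n : ℕ => g (X + n * t) := antitone_nat_of_succ_le fun n => by
      have := hX (X + n * t) (le_add_of_nonneg_right (by positivity))
      simp only [fwdDiff, Nat.cast_zero, Nat.cast_one, zero_mul, one_mul, sub_nonpos] at this
      simpa only [Nat.cast_add, Nat.cast_one, add_one_mul, ← add_assoc] using this
    obtain ⟨n, hn⟩ := ((hg.tendsto_steps X ht).eventually_gt_atTop (g (X + (0 : ℕ) * t))).exists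
    exact absurd (hanti n.zero_le) hn.not_ge

theorem eventually_fwdDiff_le_fwdDiff (hg : IsSlowlyGrowing g) (hkl : k ≤ l) :
    ∀ᶠ x in atTop, Δ_[k] g x ≤ Δ_[l] g x := by
  rcases hkl.eq_or_lt with rfl | hlt
  · exact .of_forall fun _ => le_rfl
  · have hpos := hg.eventually_fwdDiff_pos (sub_pos.2 hlt)
    filter_upwards [eventually_add_const_of_eventually hpos k] with x hx
    have := fwdDiff_add_step g k (l - k) x
    rw [add_sub_cancel] at this
    linarith

theorem eventually_natCast_mul_fwdDiff_lt_of_commensurable (hg : IsSlowlyGrowing g) (ht : 0 < t)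
    {a b p q : ℕ} (hb : 0 < b) (hab : p * b < q * a) :
    ∀ᶠ x in atTop, p * Δ_[b * t] g x < q * Δ_[a * t] g x := by
  refine (hg.lt_or_le p q _ _).resolve_right fun hle => ?_
  obtain ⟨X, hX⟩ := eventually_atTop.1 (hle.and (hg.eventually_fwdDiff_pos ht))
  have hX_le (n : ℕ) : X ≤ X + n * t := le_add_of_nonneg_right (by positivity)
  have hmono : Monotone fun n : ℕ => g (X + n * t) := monotone_nat_of_le_succ fun n => by
    have := (sub_pos.1 (hX _ (hX_le n)).2).le
    simpa only [Nat.cast_add, Nat.cast_one, add_one_mul, ← add_assoc] using this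
  obtain ⟨n, hn⟩ := exists_mul_sub_lt_mul_sub hmono (hg.tendsto_steps X ht)
    (hg.sublinear_steps X ht) hb hab
  simp only [Nat.cast_add, add_mul, ← add_assoc] at hn
  exact hn.not_ge (hX _ (hX_le n)).1

theorem eventually_natCast_mul_fwdDiff_lt (hg : IsSlowlyGrowing g) (hk : 0 < k) (hl : 0 < l)
    {p q : ℕ} (hkl : p * k < q * l) : ∀ᶠ x in atTop, p * Δ_[k] g x < q * Δ_[l] g x := by
  have hq : (0 : K) < q := by
    by_contra! hq
    nlinarith [mul_nonneg (Nat.cast_nonneg (α := K) p) hk.le]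
  -- With this mesh, `p * (k + t) = q * (l - t)`.
  set t := (q * l - p * k) / (p + q)
  have ht : 0 < t := div_pos (sub_pos.2 hkl) (by positivity)
  have ht_eq : (p + q) * t = q * l - p * k := by simp only [t]; field_simp
  obtain ⟨a, ha_le, ha_lt⟩ := exists_natCast_mul_le_lt ht hl.le
  obtain ⟨b, hb_le, hb_lt⟩ := exists_natCast_mul_le_lt ht hk.le
  have hab : p * (b + 1 : ℕ) < q * a := by
    have hpb : p * ((b + 1) * t) ≤ p * (k + t) := by gcongr; linarith
    have hqa : q * l < q * ((a + 1) * t) := by gcongr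
    have : (p * (b + 1) : K) < q * a := lt_of_mul_lt_mul_right (a := t) (by linarith) ht.le
    exact_mod_cast this
  filter_upwards [hg.eventually_fwdDiff_le_fwdDiff hb_lt.le, hg.eventually_fwdDiff_le_fwdDiff ha_le,
    hg.eventually_natCast_mul_fwdDiff_lt_of_commensurable ht b.succ_pos hab] with x hkx hlx hlt
  rw [Nat.cast_succ] at hlt
  calc p * Δ_[k] g x ≤ p * Δ_[(b + 1) * t] g x := by gcongr
    _ < q * Δ_[a * t] g x := hlt
    _ ≤ q * Δ_[l] g x := by gcongr

theorem eventually_mul_fwdDiff_lt (hg : IsSlowlyGrowing g) (hk : 0 < k) (hm : 0 ≤ m)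
    (hkl : m * k < l) : ∀ᶠ x in atTop, m * Δ_[k] g x < Δ_[l] g x := by
  have hl : 0 < l := (mul_nonneg hm hk.le).trans_lt hkl
  obtain ⟨q, hq⟩ := exists_nat_gt (k / (l - m * k))
  rw [div_lt_iff₀ (sub_pos.2 hkl)] at hq
  have hq_pos : (0 : K) < q := pos_of_mul_pos_left (hk.trans hq) (sub_pos.2 hkl).le
  obtain ⟨p, hp_le, hp_lt⟩ := exists_natCast_mul_le_lt one_pos (mul_nonneg hq_pos.le hm)
  rw [mul_one] at hp_le hp_lt
  have hpq : (p + 1 : ℕ) * k < q * l := by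
    have : (p + 1 : ℕ) * k ≤ (q * m + 1) * k := by
      rw [Nat.cast_succ]
      gcongr
    linarith
  filter_upwards [hg.eventually_natCast_mul_fwdDiff_lt hk hl hpq, hg.eventually_fwdDiff_pos hk]
    with x hx hpos
  refine lt_of_mul_lt_mul_left (a := (q : K)) ?_ hq_pos.le
  calc q * (m * Δ_[k] g x) = q * m * Δ_[k] g x := by ring
    _ < (p + 1 : ℕ) * Δ_[k] g x := by rw [Nat.cast_succ]; gcongr
    _ < q * Δ_[l] g x := hx

theorem eventually_fwdDiff_lt_mul (hg : IsSlowlyGrowing g) (hk : 0 < k) (hl : 0 < l)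
    (hlk : l < m * k) : ∀ᶠ x in atTop, Δ_[l] g x < m * Δ_[k] g x := by
  have hm : 0 < m := pos_of_mul_pos_left (hl.trans hlk) hk.le
  filter_upwards [hg.eventually_mul_fwdDiff_lt hl (inv_nonneg.2 hm.le)
    ((inv_mul_lt_iff₀ hm).2 hlk)] with x hx
  exact (inv_mul_lt_iff₀ hm).1 hx

theorem eventually_mul_fwdDiff_lt_fwdDiff_add (hg : IsSlowlyGrowing g) (ht : 0 < t) (hm : 0 ≤ m)
    (hm1 : m < 1) : ∀ᶠ x in atTop, m * Δ_[t] g x < Δ_[t] g (x + t) := by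
  have : (1 + m) * t < t + t := by nlinarith
  filter_upwards [hg.eventually_mul_fwdDiff_lt ht (by positivity) this] with x hx
  rw [fwdDiff_add_step] at hx
  linarith

theorem exists_fwdDiff_ratio_mem_Ico (hg : IsSlowlyGrowing g) (ht : 0 < t) {r s : K} (hr : 0 < r)
    (hrs : r < s) (X : K) : ∃ x > X, ∃ y > X,
      r * Δ_[t] g y ≤ Δ_[t] g x ∧ Δ_[t] g x < s * Δ_[t] g y := by
  have hs : 0 < s := hr.trans hrs
  obtain ⟨Y, hY⟩ := eventually_atTop.1 ((eventually_gt_atTop X).and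
    ((hg.eventually_fwdDiff_pos ht).and (hg.eventually_mul_fwdDiff_lt_fwdDiff_add ht
      (div_nonneg hr.le hs.le) ((div_lt_one hs).2 hrs))))
  have hY_le (n : ℕ) : Y ≤ Y + n * t := le_add_of_nonneg_right (by positivity)
  have hX (n : ℕ) : X < Y + n * t := (hY _ (hY_le n)).1
  set w := fun n : ℕ => Δ_[t] g (Y + n * t)
  have hw_pos (n : ℕ) : 0 < w n := (hY _ (hY_le n)).2.1
  have hw_succ (n : ℕ) : r / s * w n < w (n + 1) := by
    have := (hY _ (hY_le n)).2.2
    simpa only [w, Nat.cast_add, Nat.cast_one, add_one_mul, ← add_assoc] using this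
  obtain ⟨j, hj⟩ : ∃ j, w j < w 0 / s := hg.exists_fwdDiff_step_lt Y ht (div_pos (hw_pos 0) hs)
  have hsmall : ∃ n, w n < s * w j :=
    hg.exists_fwdDiff_step_lt Y ht (mul_pos hs (hw_pos j))
  classical
  -- The first small increment is not too small, since consecutive increments are nearly equal.
  obtain ⟨n, hn⟩ : ∃ n, Nat.find hsmall = n + 1 := Nat.exists_eq_succ_of_ne_zero fun h0 => by
    have := h0 ▸ Nat.find_spec hsmall
    rw [lt_div_iff₀ hs] at hj
    linarith
  have hlarge : s * w j ≤ w n := not_lt.1 (Nat.find_min hsmall (hn ▸ n.lt_succ_self))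
  refine ⟨_, hX (n + 1), _, hX j, ?_, hn ▸ Nat.find_spec hsmall⟩
  calc r * w j = r / s * (s * w j) := by field_simp
    _ ≤ r / s * w n := by gcongr
    _ ≤ w (n + 1) := (hw_succ n).le

theorem belowSqrt_of_sq_lt (hg : IsSlowlyGrowing g) (hl : 0 < l) (hlc : l ^ 2 < c) :
    BelowSqrt g c l := by
  intro X
  obtain ⟨r, hlr, hrc⟩ := exists_between ((lt_div_iff₀ hl).2 (by linarith : l * l < c))
  obtain ⟨s, hrs, hsc⟩ := exists_between hrc
  have hr : 0 < r := hl.trans hlr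
  have hs : 0 < s := hr.trans hrs
  obtain ⟨m, hlm, hmc⟩ := exists_between ((lt_div_comm₀ hl hs).2 hsc)
  obtain ⟨Y, hY⟩ := eventually_atTop.1
    ((hg.eventually_fwdDiff_lt_mul one_pos hl (by linarith : l < r * 1)).and
    ((hg.eventually_fwdDiff_lt_mul one_pos hl (by linarith : l < m * 1)).and
    (hg.eventually_mul_fwdDiff_lt one_pos (mul_nonneg (hl.trans hlm).le hs.le)
      (by linarith [(lt_div_iff₀ hs).1 hmc] : m * s * 1 < c))))
  obtain ⟨x, hx, y, hy, hle, hlt⟩ := hg.exists_fwdDiff_ratio_mem_Ico one_pos hr hrs (max X Y)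
  obtain ⟨hXx, hYx⟩ := max_lt_iff.1 hx
  obtain ⟨hXy, hYy⟩ := max_lt_iff.1 hy
  have hm : 0 < m := hl.trans hlm
  refine ⟨x, hXx, y, hXy, (hY y hYy.le).1.le.trans hle, ?_⟩
  calc Δ_[l] g x ≤ m * Δ_[1] g x := (hY x hYx.le).2.1.le
    _ ≤ m * (s * Δ_[1] g y) := by gcongr
    _ = m * s * Δ_[1] g y := (mul_assoc _ _ _).symm
    _ ≤ Δ_[c] g y := (hY y hYy.le).2.2.le

theorem sq_le_of_belowSqrt (hg : IsSlowlyGrowing g) (hc : 0 < c) (hl : 0 < l)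
    (h : BelowSqrt g c l) : l ^ 2 ≤ c := by
  by_contra! hcl
  obtain ⟨r, hr, hcr, hrl⟩ := exists_pow_btwn two_ne_zero hcl (by positivity)
  have hrl : r < l := lt_of_pow_lt_pow_left₀ 2 hl.le hrl
  obtain ⟨Y, hY⟩ := eventually_atTop.1
    ((hg.eventually_mul_fwdDiff_lt one_pos hr.le (by linarith : r * 1 < l)).and
    (hg.eventually_fwdDiff_lt_mul one_pos hc (by linarith : c < r ^ 2 * 1)))
  obtain ⟨x, hx, y, hy, hyx, hxy⟩ := h Y
  have : r ^ 2 * Δ_[1] g y < r ^ 2 * Δ_[1] g y :=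
    calc r ^ 2 * Δ_[1] g y = r * (r * Δ_[1] g y) := by ring
      _ ≤ r * Δ_[l] g y := by gcongr; exact (hY y hy.le).1.le
      _ ≤ r * Δ_[1] g x := by gcongr
      _ ≤ Δ_[l] g x := (hY x hx.le).1.le
      _ ≤ Δ_[c] g y := hxy
      _ < r ^ 2 * Δ_[1] g y := (hY y hy.le).2
  exact this.false

end IsSlowlyGrowing

theorem sq_eq_of_isGLB {K : Type*} [Field K] [LinearOrder K] [IsStrictOrderedRing K]
    [Archimedean K] {S : Set K} {c s : K} (hc : 0 < c) (hS : ∀ l > 0, c < l ^ 2 → l ∈ S)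
    (hS' : ∀ l ∈ S, 0 < l ∧ c ≤ l ^ 2) (hs : IsGLB S s) : s ^ 2 = c := by
  have hs0 : 0 ≤ s := hs.2 fun l hl => (hS' l hl).1.le
  refine le_antisymm (not_lt.1 fun hlt => ?_) (not_lt.1 fun hlt => ?_)
  · obtain ⟨r, hr, hcr, hrs⟩ := exists_pow_btwn two_ne_zero hlt (hc.trans hlt)
    exact (lt_of_pow_lt_pow_left₀ 2 hs0 hrs).not_ge (hs.1 (hS r hr hcr))
  · obtain ⟨r, hr, hsr, hrc⟩ := exists_pow_btwn two_ne_zero hlt hc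
    refine (lt_of_pow_lt_pow_left₀ 2 hr.le hsr).not_ge (hs.2 fun l hl => ?_)
    exact (lt_of_pow_lt_pow_left₀ 2 (hS' l hl).1.le (hrc.trans_le (hS' l hl).2)).le

section Intervals

variable {M : Type*}

/-- The building blocks of o-minimality: singletons and open intervals with endpoints in `M` or
infinite. -/
def IsPointOrOpenInterval [Preorder M] (I : Set M) : Prop :=
  (∃ a, I = {a}) ∨ (∃ a b, I = Ioo a b) ∨ (∃ b, I = Iio b) ∨ (∃ a, I = Ioi a) ∨ I = univ

/-- The sets an o-minimal structure is allowed to define in one variable. -/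
def IsFiniteUnionOfIntervals [Preorder M] (S : Set M) : Prop :=
  ∃ T : Finset (Set M), S = ⋃₀ ↑T ∧ ∀ I ∈ T, IsPointOrOpenInterval I

variable [LinearOrder M]

theorem IsPointOrOpenInterval.eventually_mem_or_notMem [NoMaxOrder M] {I : Set M}
    (hI : IsPointOrOpenInterval I) : (∀ᶠ x in atTop, x ∈ I) ∨ ∀ᶠ x in atTop, x ∉ I := by
  rcases hI with ⟨a, rfl⟩ | ⟨a, b, rfl⟩ | ⟨b, rfl⟩ | ⟨a, rfl⟩ | rfl
  · exact .inr (eventually_ne_atTop a)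
  · exact .inr ((eventually_ge_atTop b).mono fun x hx h => h.2.not_ge hx)
  · exact .inr ((eventually_ge_atTop b).mono fun x hx h => h.not_ge hx)
  · exact .inl (eventually_gt_atTop a)
  · exact .inl univ_mem

theorem IsFiniteUnionOfIntervals.eventually_mem_or_notMem [NoMaxOrder M] {S : Set M}
    (hS : IsFiniteUnionOfIntervals S) : (∀ᶠ x in atTop, x ∈ S) ∨ ∀ᶠ x in atTop, x ∉ S := by
  obtain ⟨T, rfl, hT⟩ := hS
  by_cases h : ∃ I ∈ T, ∀ᶠ x in atTop, x ∈ I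
  · obtain ⟨I, hIT, hI⟩ := h
    exact .inl (hI.mono fun x hx => ⟨I, hIT, hx⟩)
  · simp only [not_exists, not_and] at h
    have hnot : ∀ᶠ x in atTop, ∀ I ∈ T, x ∉ I := (Finset.eventually_all T).2 fun I hI =>
      (hT I hI).eventually_mem_or_notMem.resolve_left (h I hI)
    exact .inr (hnot.mono fun x hx ⟨I, hI, hxI⟩ => hx I hI hxI)

theorem IsPointOrOpenInterval.exists_isGLB [DenselyOrdered M] [NoMinOrder M] [NoMaxOrder M]
    {I : Set M} (hI : IsPointOrOpenInterval I) (hne : I.Nonempty) (hbdd : BddBelow I) :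
    ∃ c, IsGLB I c := by
  rcases hI with ⟨a, rfl⟩ | ⟨a, b, rfl⟩ | ⟨b, rfl⟩ | ⟨a, rfl⟩ | rfl
  · exact ⟨a, isGLB_singleton⟩
  · exact ⟨a, isGLB_Ioo (nonempty_Ioo.1 hne)⟩
  · exact absurd hbdd (not_bddBelow_Iio b)
  · exact ⟨a, isGLB_Ioi⟩
  · have := hne.to_type
    exact absurd hbdd not_bddBelow_univ

theorem IsFiniteUnionOfIntervals.exists_isGLB [DenselyOrdered M] [NoMinOrder M] [NoMaxOrder M]
    {S : Set M} (hS : IsFiniteUnionOfIntervals S) (hne : S.Nonempty) (hbdd : BddBelow S) :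
    ∃ c, IsGLB S c := by
  classical
  obtain ⟨T, rfl, hT⟩ := hS
  induction T using Finset.induction_on with
  | empty => simp at hne
  | insert I T _ ih =>
    rw [Finset.forall_mem_insert] at hT
    rw [Finset.coe_insert, sUnion_insert] at hne hbdd ⊢
    rcases I.eq_empty_or_nonempty with rfl | hI
    · rw [empty_union] at hne hbdd ⊢
      exact ih hT.2 hne hbdd
    obtain ⟨a, ha⟩ := hT.1.exists_isGLB hI (hbdd.mono subset_union_left)
    rcases (⋃₀ (T : Set (Set M))).eq_empty_or_nonempty with hempty | hne'
    · rw [hempty, union_empty]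
      exact ⟨a, ha⟩
    obtain ⟨b, hb⟩ := ih hT.2 hne' (hbdd.mono subset_union_right)
    exact ⟨a ⊓ b, ha.union hb⟩

end Intervals

section Definability

variable {L : Language} {M : Type*} [L.Structure M] {A : Set M} {α : Type*} {F G : (α → M) → M}

theorem definable_exists {P : (α → M) → M → Prop}
    (h : A.Definable L {w : α ⊕ Unit → M | P (fun i => w (.inl i)) (w (.inr ()))}) :
    A.Definable L {v | ∃ y, P v y} := by
  convert! Definable.exists_of_finite h using 1
  ext v
  exact (Equiv.funUnique Unit M).symm.exists_congr_left

theorem definable_forall {P : (α → M) → M → Prop}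
    (h : A.Definable L {w : α ⊕ Unit → M | P (fun i => w (.inl i)) (w (.inr ()))}) :
    A.Definable L {v | ∀ y, P v y} := by
  convert! Definable.forall_of_finite h using 1
  ext v
  exact (Equiv.funUnique Unit M).symm.forall_congr_left

theorem definable_imp {P Q : (α → M) → Prop} (hP : A.Definable L {v | P v})
    (hQ : A.Definable L {v | Q v}) : A.Definable L {v | P v → Q v} :=
  hP.himp hQ

theorem definable_rel₂ {R : M → M → Prop} (hR : A.Definable L {p : Fin 2 → M | R (p 0) (p 1)})
    (hF : A.DefinableFun L F) (hG : A.DefinableFun L G) :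
    A.Definable L {v | R (F v) (G v)} :=
  hR.preimage_map (F := fun v => ![F v, G v]) (Fin.forall_fin_two.2 ⟨hF, hG⟩)

variable (A L) in
/-- A function of one variable whose graph is definable. -/
def DefinableFun₁ (f : M → M) : Prop :=
  A.Definable L {p : Fin 2 → M | p 1 = f (p 0)}

theorem DefinableFun₁.comp {f : M → M} (hf : DefinableFun₁ L A f) (hF : A.DefinableFun L F) :
    A.DefinableFun L fun v => f (F v) := by
  have hgraph : A.DefinableFun L fun v : Fin 1 → M => f (v 0) := by
    rw [DefinableFun]
    convert! hf.preimage_comp ![some (0 : Fin 1), none] using 1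
    ext w
    exact eq_comm
  exact hgraph.comp (g := fun v _ => F v) fun _ => hF

end Definability

section OrderedGroup

variable (L : Language) (M : Type*) [L.Structure M]

/-- The order and the addition of `M` are definable, possibly with parameters. -/
class ExpandsOrderedAddGroup [LT M] [Add M] : Prop where
  definable_lt : (univ : Set M).Definable L {p : Fin 2 → M | p 0 < p 1}
  definable_add : (univ : Set M).Definable L {p : Fin 3 → M | p 0 + p 1 = p 2}

/-- Every set of elements of `M` definable with parameters is a finite union of points and
intervals. -/
class IsOMinimal [Preorder M] : Prop where
  isFiniteUnionOfIntervals (S : Set M) :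
    (univ : Set M).Definable₁ L S → IsFiniteUnionOfIntervals S

variable {L M} {α : Type*} {F G H : (α → M) → M}

section AddCommGroup

variable [AddCommGroup M] [LinearOrder M] [ExpandsOrderedAddGroup L M]

theorem definable_lt (hF : (univ : Set M).DefinableFun L F)
    (hG : (univ : Set M).DefinableFun L G) : (univ : Set M).Definable L {v | F v < G v} :=
  definable_rel₂ ExpandsOrderedAddGroup.definable_lt hF hG

theorem definable_le (hF : (univ : Set M).DefinableFun L F)
    (hG : (univ : Set M).DefinableFun L G) : (univ : Set M).Definable L {v | F v ≤ G v} := by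
  simpa only [compl_ofPred, not_lt] using (definable_lt hG hF).compl

@[fun_prop]
theorem definableFun_add (hF : (univ : Set M).DefinableFun L F)
    (hG : (univ : Set M).DefinableFun L G) :
    (univ : Set M).DefinableFun L fun v => F v + G v := by
  have hadd : (univ : Set M).DefinableFun L fun v : Fin 2 → M => v 0 + v 1 :=
    (ExpandsOrderedAddGroup.definable_add (L := L) (M := M)).preimage_comp
      ![some (0 : Fin 2), some 1, none]
  exact hadd.comp (g := fun v => ![F v, G v]) (Fin.forall_fin_two.2 ⟨hF, hG⟩)

@[fun_prop]
theorem definableFun_sub (hF : (univ : Set M).DefinableFun L F)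
    (hG : (univ : Set M).DefinableFun L G) :
    (univ : Set M).DefinableFun L fun v => F v - G v := by
  have hsub : (univ : Set M).DefinableFun L fun v : Fin 2 → M => v 0 - v 1 := by
    rw [DefinableFun]
    convert! (ExpandsOrderedAddGroup.definable_add (L := L) (M := M)).preimage_comp
      ![none, some (1 : Fin 2), some 0] using 1
    ext w
    exact sub_eq_iff_eq_add.trans eq_comm
  exact hsub.comp (g := fun v => ![F v, G v]) (Fin.forall_fin_two.2 ⟨hF, hG⟩)

@[fun_prop]
theorem definableFun_neg (hF : (univ : Set M).DefinableFun L F) :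
    (univ : Set M).DefinableFun L fun v => -F v := by
  simpa only [zero_sub] using definableFun_sub (L.definableFun_const α (mem_univ 0)) hF

@[fun_prop]
theorem definableFun_abs (hF : (univ : Set M).DefinableFun L F) :
    (univ : Set M).DefinableFun L fun v => |F v| := by
  simp only [abs, max_def]
  exact DefinableFun.ite (definable_le hF (definableFun_neg hF)) (definableFun_neg hF) hF

theorem DefinableFun₁.fwdDiff {f : M → M} (hf : DefinableFun₁ L univ f)
    (hH : (univ : Set M).DefinableFun L H) (hF : (univ : Set M).DefinableFun L F) :
    (univ : Set M).DefinableFun L fun v => Δ_[H v] f (F v) :=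
  definableFun_sub (hf.comp (definableFun_add hF hH)) (hf.comp hF)

theorem DefinableFun₁.of_isGLB {P : M → M → Prop} {f : M → M}
    (hP : (univ : Set M).Definable L {p : Fin 2 → M | P (p 0) (p 1)})
    (hf : ∀ y, IsGLB {x | P y x} (f y)) : DefinableFun₁ L univ f := by
  have hlower : (univ : Set M).Definable L
      {p : Fin 2 → M | ∀ x, P (p 0) x → p 1 ≤ x} :=
    definable_forall (definable_imp (definable_rel₂ hP (by fun_prop) (by fun_prop))
      (definable_le (by fun_prop) (by fun_prop)))
  have hgreatest : (univ : Set M).Definable L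
      {p : Fin 2 → M | ∀ b, (∀ x, P (p 0) x → b ≤ x) → b ≤ p 1} :=
    definable_forall (definable_imp (definable_forall (definable_imp
      (definable_rel₂ hP (by fun_prop) (by fun_prop)) (definable_le (by fun_prop) (by fun_prop))))
      (definable_le (by fun_prop) (by fun_prop)))
  have hGLB : (univ : Set M).Definable L {p : Fin 2 → M | IsGLB {x | P (p 0) x} (p 1)} :=
    hlower.inter hgreatest
  rw [DefinableFun₁]
  convert! hGLB using 1
  ext p
  exact ⟨fun h : p 1 = f (p 0) => show IsGLB _ (p 1) from h ▸ hf (p 0), fun h => h.unique (hf _)⟩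

theorem eventually_lt_or_le [NoMaxOrder M] [IsOMinimal L M] {f g : M → M}
    (hf : (univ : Set M).DefinableFun L fun v : Fin 1 → M => f (v 0))
    (hg : (univ : Set M).DefinableFun L fun v : Fin 1 → M => g (v 0)) :
    (∀ᶠ x in atTop, f x < g x) ∨ ∀ᶠ x in atTop, g x ≤ f x := by
  have hdef : (univ : Set M).Definable₁ L {x | f x < g x} := definable_lt hf hg
  simpa only [mem_ofPred_eq, not_lt] using
    (IsOMinimal.isFiniteUnionOfIntervals _ hdef).eventually_mem_or_notMem

end AddCommGroup

@[fun_prop]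
theorem definableFun_natCast_mul [Ring M] [LinearOrder M] [ExpandsOrderedAddGroup L M] (n : ℕ)
    (hF : (univ : Set M).DefinableFun L F) : (univ : Set M).DefinableFun L fun v => n * F v := by
  induction n with
  | zero => simpa only [Nat.cast_zero, zero_mul] using L.definableFun_const α (mem_univ 0)
  | succ n ih => simpa only [Nat.cast_succ, add_one_mul] using definableFun_add ih hF

theorem DefinableFun₁.definable_belowSqrt {K : Type*} [Field K] [LinearOrder K] [L.Structure K]
    [ExpandsOrderedAddGroup L K] {g : K → K} (hg : DefinableFun₁ L univ g) (c : K) :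
    (univ : Set K).Definable₁ L {l | BelowSqrt g c l} := by
  refine definable_forall (definable_exists (.inter
    (definable_lt (by fun_prop) (by fun_prop)) (definable_exists (.inter
      (definable_lt (by fun_prop) (by fun_prop)) (.inter
        (definable_le ?_ ?_) (definable_le ?_ ?_))))))
  all_goals exact hg.fwdDiff (by fun_prop (disch := simp)) (by fun_prop)

end OrderedGroup

section GeneralizedInverse

/-- `g y` is the infimum of the points `x ≥ 0` from which on `F` is at least `y`: an inverse of `F`
at infinity that makes sense without monotonicity. -/
def IsGeneralizedInverse {M : Type*} [LinearOrder M] [Zero M] (F g : M → M) : Prop :=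
  ∀ y, IsGLB {x | 0 ≤ x ∧ ∀ z, x ≤ z → y ≤ F z} (g y)

theorem IsGeneralizedInverse.tendsto_atTop {M : Type*} [LinearOrder M] [Zero M] [NoMaxOrder M]
    {F g : M → M} (hg : IsGeneralizedInverse F g) : Tendsto g atTop atTop := by
  refine Filter.tendsto_atTop.2 fun b => (eventually_gt_atTop (F b)).mono fun y hy => ?_
  exact (hg y).2 fun x hx => not_lt.1 fun hxb => (hx.2 b hxb.le).not_gt hy

theorem IsGeneralizedInverse.sublinear {K : Type*} [Field K] [LinearOrder K] [IsStrictOrderedRing K]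
    [Archimedean K] {F g : K → K} (hg : IsGeneralizedInverse F g)
    (hF : ∀ n : ℕ, ∀ᶠ x in atTop, n * x ≤ F x) (ε : K) (hε : 0 < ε) :
    ∀ᶠ y in atTop, g y ≤ ε * y := by
  obtain ⟨n, hn⟩ := exists_nat_ge ε⁻¹
  obtain ⟨X, hX⟩ := eventually_atTop.1 (hF n)
  filter_upwards [eventually_ge_atTop 0, (tendsto_id.const_mul_atTop hε).eventually_ge_atTop X]
    with y hy hXy
  refine (hg y).1 ⟨by positivity, fun z hz => ?_⟩
  calc y = ε⁻¹ * (ε * y) := (inv_mul_cancel_left₀ hε.ne' y).symm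
    _ ≤ n * z := by gcongr
    _ ≤ F z := hX z (hXy.trans hz)

theorem DefinableFun₁.exists_isGeneralizedInverse {L : Language} {M : Type*} [L.Structure M]
    [AddCommGroup M] [LinearOrder M] [DenselyOrdered M] [NoMinOrder M] [NoMaxOrder M]
    [ExpandsOrderedAddGroup L M] [IsOMinimal L M] {F : M → M} (hF : DefinableFun₁ L univ F)
    (htop : Tendsto F atTop atTop) : ∃ g, DefinableFun₁ L univ g ∧ IsGeneralizedInverse F g := by
  have hdef : (univ : Set M).Definable L
      {p : Fin 2 → M | 0 ≤ p 1 ∧ ∀ z, p 1 ≤ z → p 0 ≤ F z} :=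
    .inter (definable_le (by fun_prop (disch := simp)) (by fun_prop))
      (definable_forall (definable_imp (definable_le (by fun_prop) (by fun_prop))
        (definable_le (by fun_prop) (hF.comp (by fun_prop)))))
  have hGLB (y : M) : ∃ a, IsGLB {x | 0 ≤ x ∧ ∀ z, x ≤ z → y ≤ F z} a := by
    refine (IsOMinimal.isFiniteUnionOfIntervals (L := L) _ ?_).exists_isGLB ?_
      ⟨0, fun x hx => hx.1⟩
    · exact definable_rel₂ (R := fun y x => 0 ≤ x ∧ ∀ z, x ≤ z → y ≤ F z) hdef
        (L.definableFun_const (Fin 1) (mem_univ y)) (by fun_prop)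
    · obtain ⟨X, hX⟩ := eventually_atTop.1 (htop.eventually_ge_atTop y)
      exact ⟨max 0 X, le_max_left 0 X, fun z hz => hX z ((le_max_right 0 X).trans hz)⟩
  choose g hg using hGLB
  exact ⟨g, .of_isGLB hdef hg, hg⟩

end GeneralizedInverse

section OrderedField

variable {L : Language} {K : Type*} [Field K] [LinearOrder K] [IsStrictOrderedRing K]
  [L.Structure K] [ExpandsOrderedAddGroup L K] [IsOMinimal L K] {F g : K → K} {c : K}

theorem DefinableFun₁.isSlowlyGrowing (hg : DefinableFun₁ L univ g) (htop : Tendsto g atTop atTop)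
    (hsub : ∀ ε > 0, ∀ᶠ x in atTop, g x ≤ ε * x) : IsSlowlyGrowing g where
  tendsto_atTop := htop
  sublinear := hsub
  lt_or_le p q k l := by
    have hdef (n : ℕ) (t : K) :
        (univ : Set K).DefinableFun L fun v : Fin 1 → K => n * Δ_[t] g (v 0) :=
      definableFun_natCast_mul n
        (hg.fwdDiff (L.definableFun_const _ (mem_univ t)) (by fun_prop))
    exact eventually_lt_or_le (hdef p k) (hdef q l)

theorem IsSlowlyGrowing.isSquare [Archimedean K] (hg : IsSlowlyGrowing g)
    (hdef : DefinableFun₁ L univ g) (hc : 0 ≤ c) : IsSquare c := by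
  obtain rfl | hc := hc.eq_or_lt
  · exact .zero
  set S := {l | 0 < l ∧ ¬BelowSqrt g c l}
  have hS (l) (hl : 0 < l) (hcl : c < l ^ 2) : l ∈ S :=
    ⟨hl, fun hbelow => (hg.sq_le_of_belowSqrt hc hl hbelow).not_gt hcl⟩
  have hS' (l) (hl : l ∈ S) : 0 < l ∧ c ≤ l ^ 2 :=
    ⟨hl.1, not_lt.1 fun hlc => hl.2 (hg.belowSqrt_of_sq_lt hl.1 hlc)⟩
  have hS_def : (univ : Set K).Definable₁ L S :=
    .inter (definable_lt (by fun_prop (disch := simp)) (by fun_prop))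
      (hdef.definable_belowSqrt c).compl
  obtain ⟨s, hs⟩ := (IsOMinimal.isFiniteUnionOfIntervals S hS_def).exists_isGLB
    ⟨c + 1, hS _ (by positivity) (by nlinarith)⟩ ⟨0, fun l hl => hl.1.le⟩
  exact ⟨s, by rw [← sq, sq_eq_of_isGLB hc hS hS' hs]⟩

theorem DefinableFun₁.exists_eventually_lt_natCast_mul [Archimedean K] (hF : DefinableFun₁ L univ F)
    (hc : 0 ≤ c) (hsq : ¬IsSquare c) : ∃ n : ℕ, ∀ᶠ x in atTop, F x < n * x := by
  by_contra h
  have hsuper (n : ℕ) : ∀ᶠ x in atTop, n * x ≤ F x :=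
    (eventually_lt_or_le (hF.comp (by fun_prop)) (by fun_prop)).resolve_left
      fun hn => h ⟨n, hn⟩
  have hid : ∀ᶠ x in atTop, x ≤ F x := by simpa only [Nat.cast_one, one_mul] using hsuper 1
  have htop : Tendsto F atTop atTop := tendsto_atTop_mono' _ hid tendsto_id
  obtain ⟨g, hg, hinv⟩ := hF.exists_isGeneralizedInverse htop
  exact hsq ((hg.isSlowlyGrowing hinv.tendsto_atTop (hinv.sublinear hsuper)).isSquare hg hc)

end OrderedField

end OMinimal

theorem stmt_5_general {L : Language} {K : Type*} [Field K] [LinearOrder K] [IsStrictOrderedRing K]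
    [Archimedean K] [L.Structure K] [OMinimal.ExpandsOrderedAddGroup L K] [OMinimal.IsOMinimal L K]
    {c : K} (hc : 0 ≤ c) (hsq : ¬IsSquare c) {f : K → K} (hf : OMinimal.DefinableFun₁ L univ f) :
    ∃ (n : ℕ) (a : K), 0 < n ∧ ∀ x : K, |a| < |x| → |f x| < n * |x| := by
  have hF : OMinimal.DefinableFun₁ L univ fun x => |f x| + |f (-x)| :=
    DefinableFun.ofPred_eq (by fun_prop) (OMinimal.definableFun_add
      (OMinimal.definableFun_abs (hf.comp (by fun_prop)))
      (OMinimal.definableFun_abs (hf.comp (by fun_prop))))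
  obtain ⟨n, hn⟩ := hF.exists_eventually_lt_natCast_mul hc hsq
  obtain ⟨X, hX⟩ := Filter.eventually_atTop.1 hn
  refine ⟨n + 1, X, n.succ_pos, fun x hx => ?_⟩
  calc |f x| ≤ |f (|x|)| + |f (-|x|)| := by rcases abs_choice x with h | h <;> simp [h]
    _ < n * |x| := hX _ ((le_abs_self X).trans hx.le)
    _ ≤ (n + 1 : ℕ) * |x| := by gcongr; exact n.le_succ

/-- Every o-minimal expansion of `(ℚ, <, +, 0, 1)` is `ℚ`-linearly bounded:
for every definable `f : ℚ → ℚ` there are a positive integer `n` and `a ∈ ℚ` such that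
`|f x| < n * |x|` whenever `|x| > |a|`. -/
theorem stmt_5 (L : Language) [L.Structure ℚ]
    (hlt : Set.Definable (∅ : Set ℚ) L {p : Fin 2 → ℚ | p 0 < p 1})
    (hadd : Set.Definable (∅ : Set ℚ) L {p : Fin 3 → ℚ | p 0 + p 1 = p 2})
    (hzero : Set.Definable (∅ : Set ℚ) L {p : Fin 1 → ℚ | p 0 = 0})
    (hone : Set.Definable (∅ : Set ℚ) L {p : Fin 1 → ℚ | p 0 = 1})
    (homin : ∀ S : Set ℚ, Set.Definable₁ (univ : Set ℚ) L S →
      ∃ T : Finset (Set ℚ), S = ⋃₀ ↑T ∧ ∀ I ∈ T,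
        (∃ a : ℚ, I = {a}) ∨ (∃ a b : ℚ, I = Set.Ioo a b) ∨
          (∃ b : ℚ, I = Set.Iio b) ∨ (∃ a : ℚ, I = Set.Ioi a) ∨ I = univ) :
    ∀ f : ℚ → ℚ, Set.Definable (univ : Set ℚ) L {p : Fin 2 → ℚ | p 1 = f (p 0)} →
      ∃ (n : ℕ) (a : ℚ), 0 < n ∧ ∀ x : ℚ, |a| < |x| → |f x| < (n : ℚ) * |x| := by
  have : OMinimal.ExpandsOrderedAddGroup L ℚ :=
    ⟨hlt.mono (empty_subset _), hadd.mono (empty_subset _)⟩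
  have : OMinimal.IsOMinimal L ℚ := ⟨homin⟩
  have two_not_sq : ¬IsSquare (2 : ℚ) := by
    rw [Rat.isSquare_ofNat_iff]
    exact Nat.prime_two.prime.not_isSquare
  exact fun f => stmt_5_general zero_le_two two_not_sq
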